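/- arXiv:2104.06836 — 2 statements merged into one kernel-verified Lean document; each statement's English description precedes it below -/
import Mathlib

section
/- Let E be a real vector space, f : ℝ × E → E, u⁰ ∈ E, t ∈ ℝ, and Δt ∈ ℝ. Define the low-storage sweep u₁ = u⁰ + (Δt/2) f(t, u⁰), u₂ = u₁ + (Δt/2) f(t + Δt/2, u₁), u₃ = u₂ + (Δt/2) f(t + Δt, u₂), u₄ = (2/3) u⁰ + (1/3) u₃, u₅ = u₄ + (Δt/2) f(t + Δt/2, u₄). Define the Butcher-form stage derivatives k₁ = f(t, u⁰), k₂ = f(t + Δt/2, u⁰ + (Δt/2) k₁), k₃ = f(t + Δt, u⁰ + (Δt/2)(k₁ + k₂)), k₄ = f(t + Δt/2, u⁰ + (Δt/6)(k₁ + k₂ + k₃)). Then u₅ = u⁰ + Δt ((1/6) k₁ + (1/6) k₂ + (1/6) k₃ + (1/2) k₄); i.e., the low-storage implementation reproduces the main solution of the method SSP3(2)4 with Butcher coefficients c = (0, 1/2, 1, 1/2), a_{21} = 1/2, a_{31} = a_{32} = 1/2, a_{41} = a_{42} = a_{43} = 1/6, b = (1/6, 1/6, 1/6, 1/2). -/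
/-!
The three half steps of the sweep are forward Euler steps of a common size, so each of them only
appends a slope to the running sum of slopes: `u₃ = u⁰ + (Δt/2)(k₁ + k₂ + k₃)`. Averaging with `u⁰`,
with weights that sum to one, keeps the base point `u⁰` and scales the increment, which gives the
argument of `k₄`.
-/

section

variable {R E : Type*} [Ring R] [AddCommGroup E] [Module R E]

theorem euler_step_eq_add_smul_add {F : E → E} {h : R} {u₀ u v s k : E}
    (hu : u = u₀ + h • s) (hv : v = u + h • F u) (hk : k = F (u₀ + h • s)) :
    v = u₀ + h • (s + k) := by
  rw [hv, hk, hu, smul_add, add_assoc]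

theorem smul_add_smul_add_smul_of_add_eq_one {a b : R} (hab : a + b = 1) (h : R) (u s : E) :
    a • u + b • (u + h • s) = u + (b * h) • s := by
  rw [smul_add, ← add_assoc, ← add_smul, hab, one_smul, smul_smul]

/-- The stage maps `Fᵢ` play the role of `f (t + cᵢ Δt, ·)`; SSP3(2)4 is the case `h = Δt / 2`,
`a = 2 / 3`, `b = 1 / 3`. -/
theorem ssp43_low_storage_main_solution_general
    (F₁ F₂ F₃ F₄ : E → E) {a b : R} (hab : a + b = 1) {h : R} {u₀ u₁ u₂ u₃ u₄ u₅ k₁ k₂ k₃ k₄ : E}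
    (hu₁ : u₁ = u₀ + h • F₁ u₀)
    (hu₂ : u₂ = u₁ + h • F₂ u₁)
    (hu₃ : u₃ = u₂ + h • F₃ u₂)
    (hu₄ : u₄ = a • u₀ + b • u₃)
    (hu₅ : u₅ = u₄ + h • F₄ u₄)
    (hk₁ : k₁ = F₁ u₀)
    (hk₂ : k₂ = F₂ (u₀ + h • k₁))
    (hk₃ : k₃ = F₃ (u₀ + h • (k₁ + k₂)))
    (hk₄ : k₄ = F₄ (u₀ + (b * h) • (k₁ + k₂ + k₃))) :
    u₅ = u₀ + (b * h) • (k₁ + k₂ + k₃) + h • k₄ := by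
  have u₁_eq : u₁ = u₀ + h • k₁ := by rw [hu₁, hk₁]
  have u₂_eq : u₂ = u₀ + h • (k₁ + k₂) := euler_step_eq_add_smul_add u₁_eq hu₂ hk₂
  have u₃_eq : u₃ = u₀ + h • (k₁ + k₂ + k₃) := euler_step_eq_add_smul_add u₂_eq hu₃ hk₃
  have u₄_eq : u₄ = u₀ + (b * h) • (k₁ + k₂ + k₃) := by
    rw [hu₄, u₃_eq, smul_add_smul_add_smul_of_add_eq_one hab]
  rw [hu₅, u₄_eq, ← hk₄]

end

/-- The low-storage implementation of SSP3(2)4 reproduces the main solution of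
the method in Butcher form. -/
theorem ssp43_low_storage_main_solution
    {E : Type*} [AddCommGroup E] [Module ℝ E]
    (f : ℝ × E → E) (u0 : E) (t Δt : ℝ)
    (u1 u2 u3 u4 u5 : E) (k1 k2 k3 k4 : E)
    (hu1 : u1 = u0 + (Δt/2) • f (t, u0))
    (hu2 : u2 = u1 + (Δt/2) • f (t + Δt/2, u1))
    (hu3 : u3 = u2 + (Δt/2) • f (t + Δt, u2))
    (hu4 : u4 = (2/3 : ℝ) • u0 + (1/3 : ℝ) • u3)
    (hu5 : u5 = u4 + (Δt/2) • f (t + Δt/2, u4))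
    (hk1 : k1 = f (t, u0))
    (hk2 : k2 = f (t + Δt/2, u0 + (Δt/2) • k1))
    (hk3 : k3 = f (t + Δt, u0 + (Δt/2) • (k1 + k2)))
    (hk4 : k4 = f (t + Δt/2, u0 + (Δt/6) • (k1 + k2 + k3))) :
    u5 = u0 + Δt • ((1/6 : ℝ) • k1 + (1/6 : ℝ) • k2 + (1/6 : ℝ) • k3 + (1/2 : ℝ) • k4) := by
  rw [show Δt / 6 = 1 / 3 * (Δt / 2) by ring] at hk4
  rw [ssp43_low_storage_main_solution_general (fun x ↦ f (t, x)) (fun x ↦ f (t + Δt / 2, x))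
    (fun x ↦ f (t + Δt, x)) (fun x ↦ f (t + Δt / 2, x)) (by norm_num)
    hu1 hu2 hu3 hu4 hu5 hk1 hk2 hk3 hk4]
  module
end

section
/- Let α ≠ 0 and V_f ∈ (0,1), and let V : ℝ → ℝ be differentiable with V(x) ∈ (V_f, 1) for all x. Suppose V satisfies the implicit relation x − (α/2) ( log((1 − V(x))(V(x) − V_f)) + ((1 + V_f)/(1 − V_f)) log((1 − V(x))/(V(x) − V_f)) ) = 0 for all x ∈ ℝ. Then V solves the viscous shock momentum ODE α V(x) V'(x) − (V(x) − 1)(V(x) − V_f) = 0 for all x ∈ ℝ. -/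
/-!
The implicit relation says that `V` is a right inverse of the position `X(v)` at which the profile
takes the value `v`. The logarithms in `X` are weighted so that their derivatives add up to
`X'(v) = α v / ((v - 1) (v - Vf))`. This does not vanish on `(Vf, 1)`, so by Rolle's theorem `X` is
injective there. Hence `V` is also a left inverse of `X`, and the inverse function theorem makes `V`
differentiable with `V' = 1 / X'(V)`, which is the ODE.
-/

open Filter Set Topology

theorem injOn_of_hasDerivAt_ne_zero {f f' : ℝ → ℝ} {s : Set ℝ} (hs : s.OrdConnected)
    (hf : ∀ v ∈ s, HasDerivAt f (f' v) v) (hf' : ∀ v ∈ s, f' v ≠ 0) : InjOn f s := by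
  have not_eq_of_lt : ∀ a ∈ s, ∀ b ∈ s, a < b → f a ≠ f b := by
    intro a ha b hb hab hfab
    have hsub : Icc a b ⊆ s := hs.out ha hb
    obtain ⟨c, hc, hc_zero⟩ := exists_hasDerivAt_eq_zero hab
      (fun v hv ↦ (hf v (hsub hv)).continuousAt.continuousWithinAt) hfab
      (fun v hv ↦ hf v (hsub (Ioo_subset_Icc_self hv)))
    exact hf' c (hsub (Ioo_subset_Icc_self hc)) hc_zero
  intro a ha b hb hfab
  by_contra hab
  rcases lt_or_gt_of_ne hab with hlt | hgt
  · exact not_eq_of_lt a ha b hb hlt hfab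
  · exact not_eq_of_lt b hb a ha hgt hfab.symm

theorem hasStrictDerivAt_of_injOn_of_eventually_rightInverse {𝕜 : Type*}
    [NontriviallyNormedField 𝕜] [CompleteSpace 𝕜] {f g : 𝕜 → 𝕜} {f' x : 𝕜} {s : Set 𝕜}
    (hs : s ∈ 𝓝 (g x)) (hinj : InjOn f s) (hf : HasStrictDerivAt f f' (g x)) (hf' : f' ≠ 0)
    (hgs : ∀ᶠ y in 𝓝 x, g y ∈ s) (hfg : ∀ᶠ y in 𝓝 x, f (g y) = y) :
    HasStrictDerivAt g f'⁻¹ x := by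
  have hfgx : f (g x) = x := hfg.self_of_nhds
  have htendsto : Tendsto f (𝓝 (g x)) (𝓝 x) := by
    simpa only [ContinuousAt, hfgx] using hf.hasDerivAt.continuousAt
  have hleft : ∀ᶠ v in 𝓝 (g x), g (f v) = v := by
    filter_upwards [hs, htendsto.eventually hgs, htendsto.eventually hfg] with v hv hgv hfgv
    exact hinj hgv hv hfgv
  simpa only [hfgx] using hf.to_local_left_inverse hf' hleft

/-- The position at which a viscous shock profile with parameters `α` and `Vf` takes the value `v`,
as given by the implicit solution formula. It is meaningful for `v` strictly between `Vf` and `1`,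
where the arguments of both logarithms are positive. -/
noncomputable def shockPosition (α Vf v : ℝ) : ℝ :=
  (α / 2) * (Real.log ((1 - v) * (v - Vf))
    + ((1 + Vf) / (1 - Vf)) * Real.log ((1 - v) / (v - Vf)))

theorem hasStrictDerivAt_shockPosition (α : ℝ) {Vf v : ℝ} (hVf : Vf ≠ 1) (hv_one : v ≠ 1)
    (hv : v ≠ Vf) :
    HasStrictDerivAt (shockPosition α Vf) (α * v / ((v - 1) * (v - Vf))) v := by
  have hVf' : 1 - Vf ≠ 0 := sub_ne_zero.mpr hVf.symm
  have hleft : 1 - v ≠ 0 := sub_ne_zero.mpr hv_one.symm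
  have hright : v - Vf ≠ 0 := sub_ne_zero.mpr hv
  have dleft : HasStrictDerivAt (fun w ↦ 1 - w) (-1) v := (hasStrictDerivAt_id v).const_sub 1
  have dright : HasStrictDerivAt (fun w ↦ w - Vf) 1 v := (hasStrictDerivAt_id v).sub_const Vf
  have dlog_mul : HasStrictDerivAt (fun w ↦ Real.log ((1 - w) * (w - Vf)))
      ((1 + Vf - 2 * v) / ((1 - v) * (v - Vf))) v :=
    ((dleft.fun_mul dright).log (mul_ne_zero hleft hright)).congr_deriv (by ring)
  have dlog_div : HasStrictDerivAt (fun w ↦ Real.log ((1 - w) / (w - Vf)))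
      (-(1 - Vf) / ((1 - v) * (v - Vf))) v :=
    ((dleft.fun_div dright hright).log (div_ne_zero hleft hright)).congr_deriv (by
      field_simp
      ring)
  unfold shockPosition
  refine ((dlog_mul.fun_add (dlog_div.const_mul _)).const_mul _).congr_deriv ?_
  field_simp
  ring

theorem viscous_shock_implicit_relation_solves_ode_general {α Vf x : ℝ} (hα : α ≠ 0)
    (hVf : 0 < Vf) {V : ℝ → ℝ} (hrange : ∀ᶠ y in 𝓝 x, V y ∈ Ioo Vf 1)
    (himplicit : ∀ᶠ y in 𝓝 x, y - (α / 2) *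
      (Real.log ((1 - V y) * (V y - Vf))
        + ((1 + Vf) / (1 - Vf)) * Real.log ((1 - V y) / (V y - Vf))) = 0) :
    DifferentiableAt ℝ V x ∧ α * V x * deriv V x - (V x - 1) * (V x - Vf) = 0 := by
  have hVx : V x ∈ Ioo Vf 1 := hrange.self_of_nhds
  have hderiv : ∀ v ∈ Ioo Vf 1,
      HasStrictDerivAt (shockPosition α Vf) (α * v / ((v - 1) * (v - Vf))) v := fun v hv ↦
    hasStrictDerivAt_shockPosition α (hv.1.trans hv.2).ne hv.2.ne hv.1.ne'
  have hderiv_ne : ∀ v ∈ Ioo Vf 1, α * v / ((v - 1) * (v - Vf)) ≠ 0 := fun v hv ↦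
    div_ne_zero (mul_ne_zero hα (hVf.trans hv.1).ne')
      (mul_ne_zero (sub_ne_zero.mpr hv.2.ne) (sub_ne_zero.mpr hv.1.ne'))
  have hinj : InjOn (shockPosition α Vf) (Ioo Vf 1) :=
    injOn_of_hasDerivAt_ne_zero ordConnected_Ioo (fun v hv ↦ (hderiv v hv).hasDerivAt) hderiv_ne
  have hV : HasStrictDerivAt V (α * V x / ((V x - 1) * (V x - Vf)))⁻¹ x :=
    hasStrictDerivAt_of_injOn_of_eventually_rightInverse (Ioo_mem_nhds hVx.1 hVx.2) hinj
      (hderiv _ hVx) (hderiv_ne _ hVx) hrange (himplicit.mono fun y hy ↦ (sub_eq_zero.mp hy).symm)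
  refine ⟨hV.hasDerivAt.differentiableAt, ?_⟩
  have hVx_ne : V x ≠ 0 := (hVf.trans hVx.1).ne'
  rw [hV.hasDerivAt.deriv, inv_div, mul_div_cancel₀ _ (mul_ne_zero hα hVx_ne), sub_self]

/-- A differentiable momentum profile `V` with values in `(V_f, 1)` satisfying the
implicit viscous-shock relation solves the viscous shock momentum ODE
`α V V' − (V − 1)(V − V_f) = 0`. -/
theorem viscous_shock_implicit_relation_solves_ode
    (α Vf : ℝ) (hα : α ≠ 0) (hVf : Vf ∈ Set.Ioo (0 : ℝ) 1)
    (V : ℝ → ℝ) (hV : Differentiable ℝ V)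
    (hrange : ∀ x, V x ∈ Set.Ioo Vf 1)
    (himplicit : ∀ x, x - (α/2) *
      (Real.log ((1 - V x) * (V x - Vf))
        + ((1 + Vf)/(1 - Vf)) * Real.log ((1 - V x)/(V x - Vf))) = 0) :
    ∀ x, α * V x * deriv V x - (V x - 1) * (V x - Vf) = 0 := fun _ ↦
  (viscous_shock_implicit_relation_solves_ode_general hα hVf.1 (.of_forall hrange)
    (.of_forall himplicit)).2
end
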